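/- Let d ≥ 1, let σ > 0, let ω ∈ ℂ with Re ω > 0, let k ∈ ℝ^d, and let h : ℝ^d → ℂ be smooth and compactly supported. For v ∈ ℝ^d define u(v) = ∫_0^∞ ∫_{ℝ^d} (4πσt)^{−d/2} · exp( −t·ω − i·t·(k·(w+v))/2 − σ|k|²t³/12 − |w−v|²/(4σt) ) · h(w) dw dt. Then this double integral converges absolutely for every v, the function u is twice continuously differentiable, and it satisfies the resolvent equation ω·u(v) + i(k·v)·u(v) − σ·Δu(v) = h(v) for all v ∈ ℝ^d. -/

import Mathlib

open MeasureTheory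
open scoped ENNReal RealInnerProductSpace

/-- The Laplacian of a function `h : ℝ^d → ℂ`, as the sum of the second partial
derivatives in the coordinate directions. -/
noncomputable def lapC {d : ℕ} (h : EuclideanSpace ℝ (Fin d) → ℂ)
    (v : EuclideanSpace ℝ (Fin d)) : ℂ :=
  ∑ i : Fin d,
    fderiv ℝ (fun w => fderiv ℝ h w (EuclideanSpace.single i 1)) v (EuclideanSpace.single i 1)

/-- The Green's kernel for the resolvent of the transport-diffusion operator
`i k·v − σΔ` with spectral parameter `ω`. -/
noncomputable def greenKer (d : ℕ) (σ : ℝ) (ω : ℂ) (k : EuclideanSpace ℝ (Fin d))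
    (h : EuclideanSpace ℝ (Fin d) → ℂ) (v : EuclideanSpace ℝ (Fin d))
    (p : ℝ × EuclideanSpace ℝ (Fin d)) : ℂ :=
  (((4 * Real.pi * σ * p.1) ^ (-(d : ℝ) / 2) : ℝ) : ℂ) *
    Complex.exp (-(p.1 : ℂ) * ω - Complex.I * (p.1 : ℂ) * ((⟪k, p.2 + v⟫ : ℝ) : ℂ) / 2
      - (σ : ℂ) * ((‖k‖ : ℝ) : ℂ) ^ 2 * (p.1 : ℂ) ^ 3 / 12
      - ((‖p.2 - v‖ : ℝ) : ℂ) ^ 2 / (4 * (σ : ℂ) * (p.1 : ℂ))) *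
    h p.2

/-- The function defined by the Green's representation formula:
`u(v) = ∫_0^∞ ∫_{ℝ^d} greenKer(t, w) dw dt`. -/
noncomputable def greenSol (d : ℕ) (σ : ℝ) (ω : ℂ) (k : EuclideanSpace ℝ (Fin d))
    (h : EuclideanSpace ℝ (Fin d) → ℂ) (v : EuclideanSpace ℝ (Fin d)) : ℂ :=
  ∫ p in Set.Ioi (0 : ℝ) ×ˢ (Set.univ : Set (EuclideanSpace ℝ (Fin d))),
    greenKer d σ ω k h v p


open Real Filter Topology FourierTransform

lemma gs_norm_exp (σ : ℝ) (ω : ℂ) (a b c t : ℝ) :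
    ‖Complex.exp (-(t : ℂ) * ω - Complex.I * (t : ℂ) * (a : ℂ) / 2
      - (σ : ℂ) * (b : ℂ) ^ 2 * (t : ℂ) ^ 3 / 12
      - (c : ℂ) ^ 2 / (4 * (σ : ℂ) * (t : ℂ)))‖ =
    Real.exp (-t * ω.re - σ * b ^ 2 * t ^ 3 / 12 - c ^ 2 / (4 * σ * t)) := by
  rw [Complex.norm_exp]
  congr 1
  have h1 : Complex.I * (t : ℂ) * (a : ℂ) / 2 = ((t * a / 2 : ℝ) : ℂ) * Complex.I := by
    push_cast; ring
  have h2 : (σ : ℂ) * (b : ℂ) ^ 2 * (t : ℂ) ^ 3 / 12 = ((σ * b ^ 2 * t ^ 3 / 12 : ℝ) : ℂ) := by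
    push_cast; ring
  have h3 : (c : ℂ) ^ 2 / (4 * (σ : ℂ) * (t : ℂ)) = ((c ^ 2 / (4 * σ * t) : ℝ) : ℂ) := by
    push_cast; ring
  rw [h1, h2, h3]
  simp only [Complex.sub_re, Complex.ofReal_re, Complex.mul_re, Complex.neg_re, Complex.neg_im,
    Complex.ofReal_im, Complex.I_re, Complex.I_im]
  ring

lemma gs_gauss (d : ℕ) {s : ℝ} (hs : 0 < s) (v : EuclideanSpace ℝ (Fin d)) :
    Integrable (fun w : EuclideanSpace ℝ (Fin d) => Real.exp (-‖w - v‖ ^ 2 / s)) ∧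
    ∫ w : EuclideanSpace ℝ (Fin d), Real.exp (-‖w - v‖ ^ 2 / s) = (π * s) ^ ((d : ℝ) / 2) := by
  have e : ∀ w : EuclideanSpace ℝ (Fin d), Real.exp (-‖w - v‖ ^ 2 / s)
      = (fun w => Real.exp (-s⁻¹ * ‖w‖ ^ 2)) (w - v) := by
    intro w; simp only []; congr 1; field_simp
  have hi : ∫ w : EuclideanSpace ℝ (Fin d), Real.exp (-s⁻¹ * ‖w‖ ^ 2) = (π * s) ^ ((d : ℝ) / 2) := by
    rw [GaussianFourier.integral_rexp_neg_mul_sq_norm (inv_pos.2 hs)]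
    simp
  have hpos : (0 : ℝ) < (π * s) ^ ((d : ℝ) / 2) := by positivity
  simp_rw [e]
  refine ⟨Integrable.comp_sub_right (f := fun w => Real.exp (-s⁻¹ * ‖w‖ ^ 2)) ?_ v, ?_⟩
  · by_contra hc
    rw [integral_undef hc] at hi
    linarith
  · rw [integral_sub_right_eq_self (fun w => Real.exp (-s⁻¹ * ‖w‖ ^ 2)) v, hi]

lemma gs_measure (d : ℕ) :
    (volume : Measure (ℝ × EuclideanSpace ℝ (Fin d))).restrict (Set.Ioi (0 : ℝ) ×ˢ Set.univ)
      = (volume.restrict (Set.Ioi (0 : ℝ))).prod volume := by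
  rw [Measure.volume_eq_prod, ← Measure.prod_restrict, Measure.restrict_univ]

lemma gs_integrable (d : ℕ) (σ : ℝ) (hσ : 0 < σ) (ω : ℂ) (hω : 0 < ω.re)
    (k : EuclideanSpace ℝ (Fin d)) (h : EuclideanSpace ℝ (Fin d) → ℂ)
    (hc : Continuous h) (C : ℝ) (hC : ∀ w, ‖h w‖ ≤ C) (v : EuclideanSpace ℝ (Fin d)) :
    Integrable (greenKer d σ ω k h v) ((volume.restrict (Set.Ioi (0 : ℝ))).prod volume) := by
  have hm : Measurable (greenKer d σ ω k h v) := by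
    unfold greenKer
    have := hc.measurable
    fun_prop
  have hC0 : 0 ≤ C := (norm_nonneg _).trans (hC 0)
  have hbd : ∀ t : ℝ, 0 < t → ∀ w, ‖greenKer d σ ω k h v (t, w)‖ ≤
      C * Real.exp (-ω.re * t) * ((π * (4 * σ * t)) ^ (-(d : ℝ) / 2) *
        Real.exp (-‖w - v‖ ^ 2 / (4 * σ * t))) := by
    intro t ht w
    unfold greenKer
    simp only []
    rw [norm_mul, norm_mul, gs_norm_exp, Complex.norm_real, Real.norm_of_nonneg (by positivity)]
    have : Real.exp (-t * ω.re - σ * ‖k‖ ^ 2 * t ^ 3 / 12 - ‖w - v‖ ^ 2 / (4 * σ * t))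
        ≤ Real.exp (-ω.re * t) * Real.exp (-‖w - v‖ ^ 2 / (4 * σ * t)) := by
      rw [← Real.exp_add]
      apply Real.exp_le_exp.2
      have : 0 ≤ σ * ‖k‖ ^ 2 * t ^ 3 / 12 := by positivity
      rw [neg_div]
      linarith
    rw [show 4 * π * σ * t = π * (4 * σ * t) by ring]
    calc _ ≤ (π * (4 * σ * t)) ^ (-(d : ℝ) / 2) * (Real.exp (-ω.re * t) * Real.exp (-‖w - v‖ ^ 2 / (4 * σ * t))) * C := by
          gcongr
          exact hC w
      _ = _ := by ring
  have hint : ∀ t : ℝ, 0 < t → Integrable (fun w => C * Real.exp (-ω.re * t) * ((π * (4 * σ * t)) ^ (-(d : ℝ) / 2) *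
        Real.exp (-‖w - v‖ ^ 2 / (4 * σ * t)))) ∧ 
        ∫ w, C * Real.exp (-ω.re * t) * ((π * (4 * σ * t)) ^ (-(d : ℝ) / 2) *
        Real.exp (-‖w - v‖ ^ 2 / (4 * σ * t))) = C * Real.exp (-ω.re * t) := by
    intro t ht
    have hs : 0 < 4 * σ * t := by positivity
    refine ⟨((gs_gauss d hs v).1.const_mul _).const_mul _, ?_⟩
    rw [integral_const_mul, integral_const_mul, (gs_gauss d hs v).2, ← Real.rpow_add (by positivity)]
    rw [show -(d : ℝ) / 2 + d / 2 = 0 by ring, Real.rpow_zero, mul_one]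
  have hsec : ∀ t : ℝ, 0 < t → Integrable (fun w => greenKer d σ ω k h v (t, w)) := by
    intro t ht
    exact (hint t ht).1.mono' (hm.comp measurable_prodMk_left).aestronglyMeasurable
      (Eventually.of_forall (hbd t ht))
  rw [integrable_prod_iff hm.aestronglyMeasurable]
  constructor
  · filter_upwards [ae_restrict_mem measurableSet_Ioi] with t ht using hsec t ht
  · refine Integrable.mono' (g := fun t => C * Real.exp (-ω.re * t)) ?_ ?_ ?_
    · exact (exp_neg_integrableOn_Ioi 0 hω).const_mul C
    · exact (hm.norm.stronglyMeasurable.integral_prod_right').aestronglyMeasurable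
    · filter_upwards [ae_restrict_mem measurableSet_Ioi] with t ht
      rw [Real.norm_of_nonneg (integral_nonneg fun _ => norm_nonneg _), ← (hint t ht).2]
      exact integral_mono (hsec t ht).norm (hint t ht).1 (hbd t ht)

/-- Fourier-side amplitude. -/
noncomputable def gsAmp (d : ℕ) (σ : ℝ) (ω : ℂ) (k : EuclideanSpace ℝ (Fin d))
    (φ : EuclideanSpace ℝ (Fin d) → ℂ) (p : ℝ × EuclideanSpace ℝ (Fin d)) : ℂ :=
  Complex.exp (-(p.1 : ℂ) * ω - ((σ * (p.1 * ‖(2 * π) • p.2 + (p.1 / 2) • k‖ ^ 2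
    + p.1 ^ 3 * ‖k‖ ^ 2 / 12) : ℝ) : ℂ)) * φ p.2

/-- The phase. -/
noncomputable def gsL (d : ℕ) (k : EuclideanSpace ℝ (Fin d)) :
    (ℝ × EuclideanSpace ℝ (Fin d)) →L[ℝ] EuclideanSpace ℝ (Fin d) →L[ℝ] ℝ :=
  (innerSL ℝ) ∘L (ContinuousLinearMap.snd ℝ ℝ (EuclideanSpace ℝ (Fin d)) +
    (ContinuousLinearMap.fst ℝ ℝ (EuclideanSpace ℝ (Fin d))).smulRight ((2 * π)⁻¹ • k))

lemma gsL_apply (d : ℕ) (k : EuclideanSpace ℝ (Fin d)) (p : ℝ × EuclideanSpace ℝ (Fin d))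
    (v : EuclideanSpace ℝ (Fin d)) :
    gsL d k p v = ⟪p.2 + p.1 • (2 * π)⁻¹ • k, v⟫ := by
  simp only [gsL, ContinuousLinearMap.comp_apply, add_apply,
    ContinuousLinearMap.smulRight_apply, ContinuousLinearMap.coe_snd',
    ContinuousLinearMap.coe_fst']
  rfl

lemma gs_one_add_pow {x : ℝ} (hx : 0 ≤ x) (n : ℕ) : (1 + x) ^ n ≤ 2 ^ n * (1 + x ^ n) := by
  rcases le_total x 1 with h | h
  · calc (1 + x) ^ n ≤ 2 ^ n := by gcongr; linarith
      _ ≤ _ := by have : 0 ≤ x ^ n := by positivity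
                  nlinarith [show (0:ℝ) < 2 ^ n by positivity]
  · calc (1 + x) ^ n ≤ (2 * x) ^ n := by gcongr; linarith
      _ = 2 ^ n * x ^ n := mul_pow _ _ _
      _ ≤ _ := by nlinarith [show (0:ℝ) < 2 ^ n by positivity]

lemma gs_amp_cont (d : ℕ) (σ : ℝ) (ω : ℂ)
    (k : EuclideanSpace ℝ (Fin d)) (φ : SchwartzMap (EuclideanSpace ℝ (Fin d)) ℂ) :
    Continuous (gsAmp d σ ω k φ) := by
  unfold gsAmp
  have := φ.continuous
  fun_prop

lemma gs_amp_norm (d : ℕ) (σ : ℝ) (hσ : 0 < σ) (ω : ℂ)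
    (k : EuclideanSpace ℝ (Fin d)) (φ : EuclideanSpace ℝ (Fin d) → ℂ)
    (t : ℝ) (ht : 0 < t) (ξ) :
    ‖gsAmp d σ ω k φ (t, ξ)‖ ≤ Real.exp (-ω.re * t) * ‖φ ξ‖ := by
  unfold gsAmp
  rw [norm_mul, Complex.norm_exp]
  gcongr
  simp only [Complex.sub_re, Complex.ofReal_re, Complex.mul_re, Complex.neg_re, Complex.neg_im,
    Complex.ofReal_im]
  have : 0 ≤ σ * (t * ‖(2 * π) • ξ + (t / 2) • k‖ ^ 2 + t ^ 3 * ‖k‖ ^ 2 / 12) := by positivity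
  linarith

lemma gs_amp_int (d : ℕ) (σ : ℝ) (hσ : 0 < σ) (ω : ℂ) (hω : 0 < ω.re)
    (k : EuclideanSpace ℝ (Fin d)) (φ : SchwartzMap (EuclideanSpace ℝ (Fin d)) ℂ) (n : ℕ) :
    Integrable (fun p => (1 + ‖p‖) ^ n * ‖gsAmp d σ ω k φ p‖)
      ((volume.restrict (Set.Ioi (0 : ℝ))).prod volume) := by
  have h1 : Integrable (fun t : ℝ => (1 + t) ^ n * Real.exp (-ω.re * t))
      (volume.restrict (Set.Ioi (0 : ℝ))) := by
    have h2 : IntegrableOn (fun t : ℝ => t ^ n * Real.exp (-ω.re * t)) (Set.Ioi (0 : ℝ)) := by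
      refine integrable_of_isBigO_exp_neg (b := ω.re / 2) (by positivity) (by fun_prop) ?_
      have := (isLittleO_pow_exp_pos_mul_atTop n (b := ω.re / 2) (by positivity)).isBigO
      refine (this.mul (Asymptotics.isBigO_refl (fun t => Real.exp (-ω.re * t)) _)).congr_right ?_
      intro t
      rw [← Real.exp_add]; congr 1; ring
    have h3 := (((exp_neg_integrableOn_Ioi 0 hω).add h2).const_mul (2 ^ n))
    refine h3.mono' (by fun_prop) ?_
    filter_upwards [ae_restrict_mem measurableSet_Ioi] with t ht
    have ht : 0 < t := ht
    rw [Real.norm_of_nonneg (by positivity)]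
    have := mul_le_mul_of_nonneg_right (gs_one_add_pow ht.le n) (Real.exp_pos (-ω.re * t)).le
    simp only [Pi.add_apply]
    linarith
  have h4 : Integrable (fun ξ => (1 + ‖ξ‖) ^ n * ‖φ ξ‖) := by
    have h5 := ((φ.integrable_pow_mul volume 0).add (φ.integrable_pow_mul volume n)).const_mul (2 ^ n)
    have := φ.continuous
    refine h5.mono' (by fun_prop) (Eventually.of_forall fun ξ => ?_)
    rw [Real.norm_of_nonneg (by positivity)]
    have := mul_le_mul_of_nonneg_right (gs_one_add_pow (norm_nonneg ξ) n) (norm_nonneg (φ ξ))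
    simp only [Pi.add_apply, pow_zero]
    linarith
  have hc := gs_amp_cont d σ ω k φ
  refine (h1.mul_prod h4).mono' (by fun_prop) ?_
  have hae : ∀ᵐ p ∂((volume.restrict (Set.Ioi (0 : ℝ))).prod (volume : Measure (EuclideanSpace ℝ (Fin d)))), p ∈ Set.Ioi (0 : ℝ) ×ˢ (Set.univ : Set (EuclideanSpace ℝ (Fin d))) := by
    rw [← gs_measure]
    exact ae_restrict_mem (measurableSet_Ioi.prod MeasurableSet.univ)
  filter_upwards [hae] with p hp
  obtain ⟨t, ξ⟩ := p
  have ht : 0 < t := hp.1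
  rw [Real.norm_of_nonneg (by positivity)]
  have hn : 1 + ‖(t, ξ)‖ ≤ (1 + t) * (1 + ‖ξ‖) := by
    rw [Prod.norm_mk, Real.norm_of_nonneg ht.le]
    have : max t ‖ξ‖ ≤ t + ‖ξ‖ := max_le (by linarith [norm_nonneg ξ]) (by linarith)
    nlinarith [mul_nonneg ht.le (norm_nonneg ξ)]
  calc _ ≤ ((1 + t) * (1 + ‖ξ‖)) ^ n * (Real.exp (-ω.re * t) * ‖φ ξ‖) := by
        gcongr
        exact gs_amp_norm d σ hσ ω k φ t ht ξ
    _ = _ := by rw [mul_pow]; ring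

lemma gs_norm1 (d : ℕ) (ξ k : EuclideanSpace ℝ (Fin d)) (t : ℝ) :
    ‖(2 * π) • ξ + (t / 2) • k‖ ^ 2 =
      4 * π ^ 2 * ‖ξ‖ ^ 2 + 2 * π * t * ⟪ξ, k⟫ + t ^ 2 * ‖k‖ ^ 2 / 4 := by
  rw [norm_add_sq_real, norm_smul, norm_smul, inner_smul_left, inner_smul_right, mul_pow, mul_pow,
    Real.norm_eq_abs, Real.norm_eq_abs, sq_abs, sq_abs]
  simp only [conj_trivial]
  ring

lemma gs_norm2 (d : ℕ) (ξ k : EuclideanSpace ℝ (Fin d)) (t : ℝ) :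
    4 * π ^ 2 * ‖ξ + t • (2 * π)⁻¹ • k‖ ^ 2 =
      4 * π ^ 2 * ‖ξ‖ ^ 2 + 4 * π * t * ⟪ξ, k⟫ + t ^ 2 * ‖k‖ ^ 2 := by
  rw [smul_smul, norm_add_sq_real, norm_smul, inner_smul_right, mul_pow,
    Real.norm_eq_abs, sq_abs]
  have := Real.pi_ne_zero
  field_simp
  ring

lemma gs_phase_amp (d : ℕ) (σ : ℝ) (ω : ℂ) (k v : EuclideanSpace ℝ (Fin d))
    (φ : EuclideanSpace ℝ (Fin d) → ℂ) (t : ℝ) (ξ : EuclideanSpace ℝ (Fin d)) :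
    𝐞 (-(gsL d k (t, ξ) v)) • gsAmp d σ ω k φ (t, ξ) =
      Complex.exp (-(2 * π * Complex.I * (⟪ξ, v⟫ : ℝ)) - t * (Complex.I * (⟪k, v⟫ : ℝ) + ω)
        - σ * (t * (4 * π ^ 2 * (‖ξ‖ : ℝ) ^ 2) + t ^ 2 * (2 * π * (⟪ξ, k⟫ : ℝ))
          + t ^ 3 * (‖k‖ : ℝ) ^ 2 / 3)) * φ ξ := by
  have hpi : (π : ℂ) ≠ 0 := by exact_mod_cast Real.pi_ne_zero
  rw [gsL_apply, Circle.smul_def, Real.fourierChar_apply, gsAmp, smul_eq_mul, ← mul_assoc,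
    ← Complex.exp_add]
  simp only []
  rw [gs_norm1, inner_add_left, inner_smul_left, inner_smul_left]
  congr 2
  simp only [conj_trivial]
  push_cast
  field_simp
  ring

lemma gs_fourier_gauss (d : ℕ) (σ : ℝ) (hσ : 0 < σ) (ω : ℂ) (k v ξ : EuclideanSpace ℝ (Fin d))
    (t : ℝ) (ht : 0 < t) :
    ∫ w, 𝐞 (-⟪ξ, w⟫) • greenKer d σ ω k (fun _ => 1) v (t, w) =
      𝐞 (-(gsL d k (t, ξ) v)) • gsAmp d σ ω k (fun _ => 1) (t, ξ) := by
  have hb : 0 < (((4 * σ * t)⁻¹ : ℝ) : ℂ).re := by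
    rw [Complex.ofReal_re]; positivity
  rw [← integral_add_right_eq_self _ v, gs_phase_amp]
  have key : ∀ y : EuclideanSpace ℝ (Fin d),
      𝐞 (-⟪ξ, y + v⟫) • greenKer d σ ω k (fun _ => 1) v (t, y + v) =
      ((((π * (4 * σ * t)) ^ (-(d : ℝ) / 2) : ℝ) : ℂ) *
        Complex.exp (-(2 * π * Complex.I * (⟪ξ, v⟫ : ℝ)) - t * (Complex.I * (⟪k, v⟫ : ℝ) + ω)
          - σ * (‖k‖ : ℝ) ^ 2 * t ^ 3 / 12)) *
        Complex.exp (-(((4 * σ * t)⁻¹ : ℝ) : ℂ) * ‖y‖ ^ 2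
          + (-Complex.I) * (⟪(2 * π) • ξ + (t / 2) • k, y⟫ : ℝ)) := by
    intro y
    have hσ' : (σ : ℂ) ≠ 0 := by exact_mod_cast hσ.ne'
    have ht' : (t : ℂ) ≠ 0 := by exact_mod_cast ht.ne'
    unfold greenKer
    simp only []
    rw [Circle.smul_def, Real.fourierChar_apply, smul_eq_mul, mul_one,
      show 4 * π * σ * t = π * (4 * σ * t) by ring, mul_left_comm, ← Complex.exp_add,
      mul_assoc _ (Complex.exp _) (Complex.exp _), ← Complex.exp_add]
    congr 2
    rw [add_sub_cancel_right]
    simp only [inner_add_left, inner_add_right, inner_smul_left, conj_trivial]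
    push_cast
    field_simp
    ring
  simp_rw [key]
  rw [integral_const_mul, GaussianFourier.integral_cexp_neg_mul_sq_norm_add hb]
  have hpos : 0 < π * (4 * σ * t) := by positivity
  have h1 : ((π : ℂ) / (((4 * σ * t)⁻¹ : ℝ) : ℂ)) ^
      ((Module.finrank ℝ (EuclideanSpace ℝ (Fin d)) : ℂ) / 2) =
      (((π * (4 * σ * t)) ^ ((d : ℝ) / 2) : ℝ) : ℂ) := by
    rw [Complex.ofReal_cpow hpos.le]
    congr 1
    · push_cast; field_simp
    · simp
  have h2 : (((π * (4 * σ * t)) ^ (-(d : ℝ) / 2) : ℝ) : ℂ) *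
      (((π * (4 * σ * t)) ^ ((d : ℝ) / 2) : ℝ) : ℂ) = 1 := by
    rw [← Complex.ofReal_mul, ← Real.rpow_add hpos, show -(d : ℝ) / 2 + d / 2 = 0 by ring,
      Real.rpow_zero, Complex.ofReal_one]
  rw [h1, mul_mul_mul_comm, h2, one_mul, mul_one, ← Complex.exp_add]
  congr 1
  have h3 : ((‖(2 * π) • ξ + (t / 2) • k‖ : ℝ) : ℂ) ^ 2 =
      4 * π ^ 2 * (‖ξ‖ : ℝ) ^ 2 + 2 * π * t * (⟪ξ, k⟫ : ℝ) + t ^ 2 * (‖k‖ : ℝ) ^ 2 / 4 := by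
    rw [← Complex.ofReal_pow, gs_norm1]; push_cast; ring
  have hσ' : (σ : ℂ) ≠ 0 := by exact_mod_cast hσ.ne'
  have ht' : (t : ℂ) ≠ 0 := by exact_mod_cast ht.ne'
  rw [h3, neg_sq, Complex.I_sq]
  push_cast
  field_simp
  ring

lemma gs_section (d : ℕ) (σ : ℝ) (hσ : 0 < σ) (ω : ℂ) (k v : EuclideanSpace ℝ (Fin d))
    (φ : SchwartzMap (EuclideanSpace ℝ (Fin d)) ℂ) (t : ℝ) (ht : 0 < t) :
    ∫ w, greenKer d σ ω k (𝓕 (φ : EuclideanSpace ℝ (Fin d) → ℂ)) v (t, w) =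
      ∫ ξ, 𝐞 (-(gsL d k (t, ξ) v)) • gsAmp d σ ω k φ (t, ξ) := by
  have hgi : Integrable (fun w => greenKer d σ ω k (fun _ => 1) v (t, w)) := by
    have hs : 0 < 4 * σ * t := by positivity
    refine (((gs_gauss d hs v).1.const_mul (Real.exp (-t * ω.re))).const_mul
      ((4 * π * σ * t) ^ (-(d : ℝ) / 2))).mono' ?_ (Eventually.of_forall fun w => ?_)
    · unfold greenKer
      apply Measurable.aestronglyMeasurable
      fun_prop
    · unfold greenKer
      rw [norm_mul, norm_mul, gs_norm_exp, Complex.norm_real, Real.norm_of_nonneg (by positivity),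
        norm_one, mul_one]
      gcongr
      rw [← Real.exp_add]
      apply Real.exp_le_exp.2
      have : 0 ≤ σ * ‖k‖ ^ 2 * t ^ 3 / 12 := by positivity
      rw [neg_div]
      simp only []
      linarith
  have hfl := VectorFourier.integral_fourierIntegral_smul_eq_flip (μ := volume) (ν := volume)
    (L := innerₗ (EuclideanSpace ℝ (Fin d))) Real.continuous_fourierChar continuous_inner
    φ.integrable hgi
  calc _ = ∫ w, (VectorFourier.fourierIntegral 𝐞 volume (innerₗ (EuclideanSpace ℝ (Fin d))) φ w) •
        greenKer d σ ω k (fun _ => 1) v (t, w) := by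
        congr 1; ext w
        simp only [greenKer, smul_eq_mul, mul_one]
        rw [mul_comm]; rfl
    _ = _ := by
        rw [hfl]
        congr 1; ext ξ
        have h1 : VectorFourier.fourierIntegral 𝐞 volume (innerₗ (EuclideanSpace ℝ (Fin d))).flip
            (fun w => greenKer d σ ω k (fun _ => 1) v (t, w)) ξ =
            ∫ w, 𝐞 (-⟪ξ, w⟫) • greenKer d σ ω k (fun _ => 1) v (t, w) := by
          simp [VectorFourier.fourierIntegral, real_inner_comm]
        rw [h1, gs_fourier_gauss d σ hσ ω k v ξ t ht, gs_phase_amp, gs_phase_amp]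
        simp only [smul_eq_mul, mul_one]
        ring

lemma gs_fderiv {d : ℕ} {μ : Measure (ℝ × EuclideanSpace ℝ (Fin d))}
    (L : (ℝ × EuclideanSpace ℝ (Fin d)) →L[ℝ] EuclideanSpace ℝ (Fin d) →L[ℝ] ℝ)
    (f : ℝ × EuclideanSpace ℝ (Fin d) → ℂ) (hf : Integrable f μ)
    (hf' : Integrable (fun v => ‖v‖ * ‖f v‖) μ) (w y : EuclideanSpace ℝ (Fin d)) :
    fderiv ℝ (VectorFourier.fourierIntegral 𝐞 μ L.toLinearMap₁₂ f) w y =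
      VectorFourier.fourierIntegral 𝐞 μ L.toLinearMap₁₂
        (fun p => -(2 * π * Complex.I) * (L p y : ℝ) * f p) w := by
  rw [VectorFourier.fderiv_fourierIntegral L hf hf',
    Real.fourierIntegral_continuousLinearMap_apply']
  · congr 1
    ext p
    simp [VectorFourier.fourierSMulRight_apply]
    try ring
  · refine (hf'.const_mul (2 * π * ‖L‖)).mono' hf.1.fourierSMulRight
      (Eventually.of_forall fun p => ?_)
    exact (VectorFourier.norm_fourierSMulRight_le L f p).trans (le_of_eq (by ring))

lemma gs_hasDeriv (a b c e g s : ℂ) (x : ℂ) (t : ℝ) :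
    HasDerivAt (fun t : ℝ => Complex.exp (a - t * b - s * (t * c + t ^ 2 * e + t ^ 3 * g / 3)) * x)
      (-((b + s * (c + 2 * t * e + t ^ 2 * g)) *
        (Complex.exp (a - t * b - s * (t * c + t ^ 2 * e + t ^ 3 * g / 3)) * x))) t := by
  have h0 : HasDerivAt (fun t : ℝ => (t : ℂ)) 1 t := Complex.ofRealCLM.hasDerivAt
  have h1 : HasDerivAt (fun t : ℝ => a - t * b - s * (t * c + (t : ℂ) ^ 2 * e + (t : ℂ) ^ 3 * g / 3))
      (-(b + s * (c + 2 * t * e + t ^ 2 * g))) t := by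
    refine HasDerivAt.congr_deriv (((h0.mul_const b).const_sub a).sub ((((h0.mul_const c).add
      ((h0.pow 2).mul_const e)).add (((h0.pow 3).mul_const g).div_const 3)).const_mul s)) ?_
    push_cast
    ring
  refine HasDerivAt.congr_deriv (h1.cexp.mul_const x) ?_
  ring

lemma gs_equation (d : ℕ) (σ : ℝ) (hσ : 0 < σ) (ω : ℂ) (hω : 0 < ω.re)
    (k v : EuclideanSpace ℝ (Fin d)) (φ : SchwartzMap (EuclideanSpace ℝ (Fin d)) ℂ) :
    ω * VectorFourier.fourierIntegral 𝐞 ((volume.restrict (Set.Ioi (0 : ℝ))).prod volume)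
        (gsL d k).toLinearMap₁₂ (gsAmp d σ ω k φ) v
      + Complex.I * ((⟪k, v⟫ : ℝ) : ℂ) *
        VectorFourier.fourierIntegral 𝐞 ((volume.restrict (Set.Ioi (0 : ℝ))).prod volume)
        (gsL d k).toLinearMap₁₂ (gsAmp d σ ω k φ) v
      - (σ : ℂ) * lapC (VectorFourier.fourierIntegral 𝐞
        ((volume.restrict (Set.Ioi (0 : ℝ))).prod volume)
        (gsL d k).toLinearMap₁₂ (gsAmp d σ ω k φ)) v
      = 𝓕 (φ : EuclideanSpace ℝ (Fin d) → ℂ) v := by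
  set μ : Measure (ℝ × EuclideanSpace ℝ (Fin d)) :=
    (volume.restrict (Set.Ioi (0 : ℝ))).prod volume with hμ
  set L := gsL d k with hL
  set A := gsAmp d σ ω k φ with hA
  have hAc : Continuous A := gs_amp_cont d σ ω k φ
  -- multiplying by continuous functions of polynomial growth
  have hint : ∀ (n : ℕ) (C : ℝ) (q : ℝ × EuclideanSpace ℝ (Fin d) → ℂ), Continuous q →
      (∀ p, ‖q p‖ ≤ C * (1 + ‖p‖) ^ n) → Integrable (fun p => q p * A p) μ := by
    intro n C q hq hb
    refine ((gs_amp_int d σ hσ ω hω k φ n).const_mul C).mono'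
      (hq.mul hAc).aestronglyMeasurable (Eventually.of_forall fun p => ?_)
    rw [norm_mul, ← mul_assoc]
    exact mul_le_mul_of_nonneg_right (hb p) (norm_nonneg _)
  have hLb : ∀ p y, ‖((L p y : ℝ) : ℂ)‖ ≤ (‖L‖ * ‖y‖) * (1 + ‖p‖) := by
    intro p y
    rw [Complex.norm_real]
    calc _ ≤ ‖L‖ * ‖p‖ * ‖y‖ := L.le_opNorm₂ p y
      _ = (‖L‖ * ‖y‖) * ‖p‖ := by ring
      _ ≤ _ := by gcongr; linarith
  have hLc : ∀ y, Continuous fun p => ((L p y : ℝ) : ℂ) := by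
    intro y; fun_prop
  have hA0 : Integrable A μ := by
    simpa using hint 0 1 (fun _ => 1) continuous_const (by simp)
  have hA1 : Integrable (fun p => ‖p‖ * ‖A p‖) μ := by
    have := (hint 1 1 (fun p => (‖p‖ : ℂ)) (by fun_prop) (by intro p; simp)).norm
    simpa using this
  have hB0 : ∀ y, Integrable (fun p => -(2 * π * Complex.I) * (L p y : ℝ) * A p) μ := by
    intro y
    refine hint 1 (2 * π * (‖L‖ * ‖y‖)) _ (continuous_const.mul (hLc y)) fun p => ?_
    have h1 : ‖-(2 * π * Complex.I : ℂ)‖ = 2 * π := by simp [abs_of_pos Real.pi_pos]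
    rw [norm_mul, pow_one, h1]
    exact (mul_le_mul_of_nonneg_left (hLb p y) (by positivity)).trans (le_of_eq (by ring))
  have hB1 : ∀ y, Integrable (fun p => ‖p‖ * ‖-(2 * π * Complex.I) * (L p y : ℝ) * A p‖) μ := by
    intro y
    have := (hint 2 (2 * π * (‖L‖ * ‖y‖))
      (fun p => (‖p‖ : ℂ) * (-(2 * π * Complex.I) * (L p y : ℝ)))
      (by have := hLc y; fun_prop) fun p => ?_).norm
    · simpa [mul_assoc] using this
    · rw [norm_mul, norm_mul]
      have h1 : ‖-(2 * π * Complex.I : ℂ)‖ = 2 * π := by simp [abs_of_pos Real.pi_pos]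
      have h2 : ‖(‖p‖ : ℂ)‖ ≤ 1 + ‖p‖ := by simp
      rw [h1]
      calc _ ≤ (1 + ‖p‖) * (2 * π * ((‖L‖ * ‖y‖) * (1 + ‖p‖))) := by
            gcongr
            exact hLb p y
        _ = _ := by ring
  have hC0 : ∀ y, Integrable (fun p => -(2 * π * Complex.I) * (L p y : ℝ) *
      (-(2 * π * Complex.I) * (L p y : ℝ) * A p)) μ := by
    intro y
    have := hint 2 ((2 * π * (‖L‖ * ‖y‖)) ^ 2)
      (fun p => (-(2 * π * Complex.I) * (L p y : ℝ)) * (-(2 * π * Complex.I) * (L p y : ℝ)))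
      (by have := hLc y; fun_prop) fun p => ?_
    · simpa only [mul_assoc] using this
    · rw [norm_mul, norm_mul]
      have h1 : ‖-(2 * π * Complex.I : ℂ)‖ = 2 * π := by simp [abs_of_pos Real.pi_pos]
      rw [h1]
      calc _ ≤ (2 * π * ((‖L‖ * ‖y‖) * (1 + ‖p‖))) * (2 * π * ((‖L‖ * ‖y‖) * (1 + ‖p‖))) := by
            gcongr <;> exact hLb p y
        _ = _ := by ring
  -- the Laplacian
  have hlap : lapC (VectorFourier.fourierIntegral 𝐞 μ L.toLinearMap₁₂ A) v =
      ∑ i : Fin d, ∫ p, 𝐞 (-(L p v)) • (-(2 * π * Complex.I) * (L p (EuclideanSpace.single i 1) : ℝ) *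
      (-(2 * π * Complex.I) * (L p (EuclideanSpace.single i 1) : ℝ) * A p)) ∂μ := by
    unfold lapC
    refine Finset.sum_congr rfl fun i _ => ?_
    have h1 : (fun w => fderiv ℝ (VectorFourier.fourierIntegral 𝐞 μ L.toLinearMap₁₂ A) w
        (EuclideanSpace.single i 1)) = VectorFourier.fourierIntegral 𝐞 μ L.toLinearMap₁₂
        (fun p => -(2 * π * Complex.I) * (L p (EuclideanSpace.single i 1) : ℝ) * A p) := by
      ext w
      exact gs_fderiv L A hA0 hA1 w _
    rw [h1, gs_fderiv L _ (hB0 _) (hB1 _)]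
    rfl
  have hconv : ∀ f : ℝ × EuclideanSpace ℝ (Fin d) → ℂ, Integrable f μ →
      Integrable (fun p => 𝐞 (-(L p v)) • f p) μ := by
    intro f hf
    exact (VectorFourier.fourierIntegral_convergent_iff (L := L.toLinearMap₁₂)
      Real.continuous_fourierChar (by exact L.continuous₂) v).2 hf
  have hu : VectorFourier.fourierIntegral 𝐞 μ L.toLinearMap₁₂ A v =
      ∫ p, 𝐞 (-(L p v)) • A p ∂μ := rfl
  rw [hlap, hu, ← integral_finsetSum _ (fun i _ => hconv _ (hC0 _)), ← integral_const_mul,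
    ← integral_const_mul, ← integral_const_mul, ← integral_add ((hconv _ hA0).const_mul _)
      ((hconv _ hA0).const_mul _), ← integral_sub (((hconv _ hA0).const_mul _).fun_add
      ((hconv _ hA0).const_mul _))
      ((integrable_finsetSum _ (fun i _ => hconv _ (hC0 _))).const_mul _)]
  have htot := (((hconv _ hA0).const_mul ω).add
      ((hconv _ hA0).const_mul (Complex.I * ((⟪k, v⟫ : ℝ) : ℂ)))).sub
      ((integrable_finsetSum Finset.univ
        (fun i _ => hconv _ (hC0 (EuclideanSpace.single i 1)))).const_mul (σ : ℂ))
  have hpt : ∀ p : ℝ × EuclideanSpace ℝ (Fin d), ω * (𝐞 (-(L p v)) • A p) +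
      Complex.I * ((⟪k, v⟫ : ℝ) : ℂ) * (𝐞 (-(L p v)) • A p) - (σ : ℂ) * ∑ i : Fin d,
        𝐞 (-(L p v)) • (-(2 * π * Complex.I) * (L p (EuclideanSpace.single i 1) : ℝ) *
      (-(2 * π * Complex.I) * (L p (EuclideanSpace.single i 1) : ℝ) * A p)) =
      (Complex.I * ((⟪k, v⟫ : ℝ) : ℂ) + ω + σ * (4 * π ^ 2 * (‖p.2‖ : ℝ) ^ 2
        + 2 * p.1 * (2 * π * (⟪p.2, k⟫ : ℝ)) + p.1 ^ 2 * (‖k‖ : ℝ) ^ 2)) *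
        (𝐞 (-(L p v)) • A p) := by
    intro p
    have hs : ∑ i : Fin d, (L p (EuclideanSpace.single i 1)) ^ 2
        = ‖p.2 + p.1 • (2 * π)⁻¹ • k‖ ^ 2 := by
      rw [EuclideanSpace.real_norm_sq_eq]
      refine Finset.sum_congr rfl fun i _ => ?_
      rw [hL, gsL_apply, EuclideanSpace.inner_single_right]
      simp
    have hs2 : ∑ i : Fin d, 𝐞 (-(L p v)) • (-(2 * π * Complex.I) * (L p (EuclideanSpace.single i 1) : ℝ) *
      (-(2 * π * Complex.I) * (L p (EuclideanSpace.single i 1) : ℝ) * A p)) =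
        -(((4 * π ^ 2 * ∑ i : Fin d, (L p (EuclideanSpace.single i 1)) ^ 2 : ℝ) : ℂ)) *
          (𝐞 (-(L p v)) • A p) := by
      push_cast
      rw [Finset.mul_sum, ← Finset.sum_neg_distrib, Finset.sum_mul]
      refine Finset.sum_congr rfl fun i _ => ?_
      rw [Circle.smul_def, Circle.smul_def, smul_eq_mul, smul_eq_mul]
      linear_combination (4 * (π : ℂ) ^ 2 * (L p (EuclideanSpace.single i 1) : ℝ) ^ 2 *
        (𝐞 (-(L p v)) : ℂ) * A p) * Complex.I_sq
    rw [hs2, hs, gs_norm2]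
    push_cast
    ring
  have htot' : Integrable (fun p : ℝ × EuclideanSpace ℝ (Fin d) =>
      (Complex.I * ((⟪k, v⟫ : ℝ) : ℂ) + ω + σ * (4 * π ^ 2 * (‖p.2‖ : ℝ) ^ 2
        + 2 * p.1 * (2 * π * (⟪p.2, k⟫ : ℝ)) + p.1 ^ 2 * (‖k‖ : ℝ) ^ 2)) *
        (𝐞 (-(L p v)) • A p)) μ := by
    refine htot.congr (Eventually.of_forall fun p => ?_)
    exact hpt p
  simp_rw [hpt]
  rw [hμ, integral_prod_symm _ htot']
  have hF : 𝓕 (φ : EuclideanSpace ℝ (Fin d) → ℂ) v = ∫ ξ, 𝐞 (-⟪ξ, v⟫) • φ ξ := rfl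
  rw [hF]
  refine integral_congr_ae ?_
  filter_upwards [htot'.prod_left_ae] with ξ hξ
  have hder := fun t : ℝ => gs_hasDeriv (-(2 * π * Complex.I * (⟪ξ, v⟫ : ℝ)))
    (Complex.I * ((⟪k, v⟫ : ℝ) : ℂ) + ω) (4 * π ^ 2 * (‖ξ‖ : ℝ) ^ 2) (2 * π * (⟪ξ, k⟫ : ℝ))
    ((‖k‖ : ℝ) ^ 2) σ (φ ξ) t
  simp_rw [← gs_phase_amp d σ ω k v φ _ ξ] at hder
  have hlim : Tendsto (fun t : ℝ => 𝐞 (-(gsL d k (t, ξ) v)) • gsAmp d σ ω k φ (t, ξ)) atTop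
      (𝓝 0) := by
    have h0 : Tendsto (fun t : ℝ => Real.exp (-ω.re * t) * ‖φ ξ‖) atTop (𝓝 0) := by
      have : Tendsto (fun t : ℝ => -ω.re * t) atTop atBot :=
        tendsto_id.const_mul_atTop_of_neg (by linarith)
      simpa using (Real.tendsto_exp_atBot.comp this).mul_const ‖φ ξ‖
    refine squeeze_zero_norm' ?_ h0
    filter_upwards [eventually_gt_atTop 0] with t ht
    rw [Circle.norm_smul]
    exact gs_amp_norm d σ hσ ω k φ t ht ξ
  have hfin := integral_Ioi_of_hasDerivAt_of_tendsto' (a := (0 : ℝ)) (fun t _ => hder t)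
    (by exact hξ.neg) hlim
  rw [integral_neg, zero_sub, neg_inj] at hfin
  refine hfin.trans ?_
  simp [gsL_apply, gsAmp]

lemma gs_sol_eq (d : ℕ) (σ : ℝ) (hσ : 0 < σ) (ω : ℂ) (hω : 0 < ω.re)
    (k : EuclideanSpace ℝ (Fin d)) (φ : SchwartzMap (EuclideanSpace ℝ (Fin d)) ℂ)
    (hi : ∀ v, Integrable (greenKer d σ ω k (𝓕 (φ : EuclideanSpace ℝ (Fin d) → ℂ)) v)
      ((volume.restrict (Set.Ioi (0 : ℝ))).prod volume)) :
    greenSol d σ ω k (𝓕 (φ : EuclideanSpace ℝ (Fin d) → ℂ)) =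
      VectorFourier.fourierIntegral 𝐞 ((volume.restrict (Set.Ioi (0 : ℝ))).prod volume)
        (gsL d k).toLinearMap₁₂ (gsAmp d σ ω k φ) := by
  ext v
  have hA0 : Integrable (gsAmp d σ ω k φ) ((volume.restrict (Set.Ioi (0 : ℝ))).prod volume) := by
    refine (gs_amp_int d σ hσ ω hω k φ 0).mono' (gs_amp_cont d σ ω k φ).aestronglyMeasurable
      (Eventually.of_forall fun p => by simp)
  have hc : Integrable (fun p => 𝐞 (-(gsL d k p v)) • gsAmp d σ ω k φ p)
      ((volume.restrict (Set.Ioi (0 : ℝ))).prod volume) :=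
    (VectorFourier.fourierIntegral_convergent_iff (L := (gsL d k).toLinearMap₁₂)
      Real.continuous_fourierChar (by exact (gsL d k).continuous₂) v).2 hA0
  have h2 : VectorFourier.fourierIntegral 𝐞 ((volume.restrict (Set.Ioi (0 : ℝ))).prod volume)
        (gsL d k).toLinearMap₁₂ (gsAmp d σ ω k φ) v =
      ∫ p, 𝐞 (-(gsL d k p v)) • gsAmp d σ ω k φ p
        ∂((volume.restrict (Set.Ioi (0 : ℝ))).prod volume) := rfl
  rw [greenSol, gs_measure, h2, integral_prod _ (hi v), integral_prod _ hc]
  refine setIntegral_congr_fun measurableSet_Ioi fun t ht => ?_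
  exact gs_section d σ hσ ω k v φ t ht

/-- Green's function representation for the resolvent of `i k·v − σΔ`: the double
integral converges absolutely, defines a `C²` function `u`, and
`ω u + i (k·v) u − σ Δu = h`. -/
theorem stmt6 (d : ℕ) (hd : 1 ≤ d) (σ : ℝ) (hσ : 0 < σ) (ω : ℂ) (hω : 0 < ω.re)
    (k : EuclideanSpace ℝ (Fin d)) (h : EuclideanSpace ℝ (Fin d) → ℂ)
    (hsm : ContDiff ℝ (⊤ : ℕ∞) h) (hsupp : HasCompactSupport h) :
    (∀ v, IntegrableOn (greenKer d σ ω k h v)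
        (Set.Ioi (0 : ℝ) ×ˢ (Set.univ : Set (EuclideanSpace ℝ (Fin d)))) volume) ∧
    ContDiff ℝ 2 (greenSol d σ ω k h) ∧
    ∀ v, ω * greenSol d σ ω k h v
        + Complex.I * ((⟪k, v⟫ : ℝ) : ℂ) * greenSol d σ ω k h v
        - (σ : ℂ) * lapC (greenSol d σ ω k h) v = h v := by
  have hμ := gs_measure d
  obtain ⟨C, hC⟩ := hsm.continuous.bounded_above_of_compact_support hsupp
  have hint := gs_integrable d σ hσ ω hω k h hsm.continuous C hC
  obtain ⟨φ, hφ⟩ : ∃ φ : SchwartzMap (EuclideanSpace ℝ (Fin d)) ℂ,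
      h = 𝓕 (φ : EuclideanSpace ℝ (Fin d) → ℂ) := by
    refine ⟨𝓕⁻ (hsupp.toSchwartzMap hsm), ?_⟩
    rw [← SchwartzMap.fourier_coe, FourierTransform.fourier_fourierInv_eq]
    rfl
  subst hφ
  have hsol := gs_sol_eq d σ hσ ω hω k φ hint
  refine ⟨fun v => ?_, ?_, ?_⟩
  · rw [IntegrableOn, hμ]
    exact hint v
  · rw [hsol]
    refine VectorFourier.contDiff_fourierIntegral (N := 2) (gsL d k) fun n _ => ?_
    refine (gs_amp_int d σ hσ ω hω k φ n).mono' ?_ (Eventually.of_forall fun p => ?_)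
    · have := gs_amp_cont d σ ω k φ
      fun_prop
    · rw [Real.norm_of_nonneg (by positivity)]
      gcongr
      linarith
  · intro v
    rw [hsol]
    exact gs_equation d σ hσ ω hω k v φ
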